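/- Let 0 < s < 1 and let f lie in the finite linear span of the Haar system H of ℝ⁺. Then Σ_{i≥0} ‖D^s_{(i)} f‖²_{L²(ℝ⁺)} = Σ_{h∈H} |I(h)|^{-2s} |⟨f,h⟩|², and there exists a constant c > 0 (independent of f) such that the dyadic energy satisfies E^δ_s(f) = c · Σ_{i≥0} ‖D^s_{(i)} f‖²_{L²(ℝ⁺)}. In particular E^δ_s(f) is finite if and only if the gradient ∇^s_{dy} f = (D^s_{(i)} f)_{i≥0} belongs to L²(ℝ⁺, ℓ²). -/

import Mathlib

open MeasureTheory Set
open scoped ENNReal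

noncomputable section

/-- The dyadic interval `I^j_k = [k 2^{-j}, (k+1) 2^{-j})` of `ℝ⁺`. -/
def dyI (j : ℤ) (k : ℕ) : Set ℝ := Set.Ico ((k : ℝ) * 2 ^ (-j)) (((k : ℝ) + 1) * 2 ^ (-j))

/-- The family `D` of dyadic intervals of `ℝ⁺`. -/
def IsDyadic (I : Set ℝ) : Prop := ∃ (j : ℤ) (k : ℕ), I = dyI j k

/-- `I(x,y)`: the smallest dyadic interval containing both `x` and `y`. -/
def dyInt (x y : ℝ) : Set ℝ := ⋂₀ {I : Set ℝ | IsDyadic I ∧ x ∈ I ∧ y ∈ I}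

/-- The dyadic distance `δ(x,y) = |I(x,y)|`, with `δ(x,x) = 0`. -/
def dyDist (x y : ℝ) : ℝ := if x = y then 0 else (volume (dyInt x y)).toReal

/-- The `l`-th dyadic ancestor of a dyadic interval: the unique dyadic interval
containing it whose measure is `2^l` times larger. -/
def dyAncestor (l : ℕ) (I : Set ℝ) : Set ℝ :=
  ⋂₀ {J : Set ℝ | IsDyadic J ∧ I ⊆ J ∧ volume J = 2 ^ l * volume I}

/-- The butterfly of the interval `[a, b)`:
`B = (I⁺ × I⁻) ∪ (I⁻ × I⁺)` where `I⁻, I⁺` are the two halves. -/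
def bflyI (a b : ℝ) : Set (ℝ × ℝ) :=
  (Set.Ico ((a + b) / 2) b ×ˢ Set.Ico a ((a + b) / 2)) ∪
    (Set.Ico a ((a + b) / 2) ×ˢ Set.Ico ((a + b) / 2) b)

/-- The butterfly `B(I^j_k)`. -/
def bfly (j : ℤ) (k : ℕ) : Set (ℝ × ℝ) := bflyI ((k : ℝ) * 2 ^ (-j)) (((k : ℝ) + 1) * 2 ^ (-j))

/-- The butterfly of an interval given as a set. -/
def bflySet (I : Set ℝ) : Set (ℝ × ℝ) := bflyI (sInf I) (sSup I)

/-- `Γ_k = ⋃_{l ∈ ℤ} B(2^l · [k, k+1))`. -/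
def Gam (k : ℕ) : Set (ℝ × ℝ) := ⋃ l : ℤ, bflyI ((k : ℝ) * 2 ^ l) (((k : ℝ) + 1) * 2 ^ l)

/-- The basic Haar wavelet `h^0_0 = 1_{[0,1/2)} - 1_{[1/2,1)}`. -/
def haar0 (x : ℝ) : ℝ :=
  Set.indicator (Set.Ico (0 : ℝ) (1 / 2)) (fun _ => 1) x
    - Set.indicator (Set.Ico (1 / 2 : ℝ) 1) (fun _ => 1) x

/-- The Haar wavelet `h^j_k(x) = 2^{j/2} h^0_0(2^j x - k)`, supported in `I^j_k`. -/
def haar (j : ℤ) (k : ℕ) (x : ℝ) : ℝ := (2 : ℝ) ^ ((j : ℝ) / 2) * haar0 (2 ^ j * x - (k : ℝ))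

/-- The finite linear span of the Haar system. -/
def HaarSpan (f : ℝ → ℝ) : Prop :=
  ∃ (F : Finset (ℤ × ℕ)) (c : ℤ × ℕ → ℝ), f = fun x => ∑ p ∈ F, c p * haar p.1 p.2 x

/-- `Ω_m(x,y) = δ(x,y) Σ_{I ∈ D} m(I) h_I(x) h_I(y)`. -/
def Omega (m : Set ℝ → ℝ) (x y : ℝ) : ℝ :=
  dyDist x y * ∑' p : ℤ × ℕ, m (dyI p.1 p.2) * (haar p.1 p.2 x * haar p.1 p.2 y)

/-- The dyadic fractional Laplacian `(-Δ)^{s/2}_{dy} f = Σ_{h ∈ H} |I(h)|^{-s} ⟨f, h⟩ h`. -/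
def dyLap (s : ℝ) (f : ℝ → ℝ) (x : ℝ) : ℝ :=
  ∑' p : ℤ × ℕ,
    (volume (dyI p.1 p.2)).toReal ^ (-s) * (∫ y, f y * haar p.1 p.2 y) * haar p.1 p.2 x

/-- The partial dyadic derivative `D^s_{(i)} f = Σ_{j ∈ ℤ} 2^{sj} ⟨f, h^j_i⟩ h^j_i`. -/
def Dsi (s : ℝ) (i : ℕ) (f : ℝ → ℝ) (x : ℝ) : ℝ :=
  ∑' j : ℤ, (2 : ℝ) ^ (s * (j : ℝ)) * (∫ y, f y * haar j i y) * haar j i x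

/-- The Haar multiplier `T_{(i)} g = Σ_{j ∈ ℤ} ⟨g, h^j_i⟩ h^j_i`. -/
def Ti (i : ℕ) (g : ℝ → ℝ) (x : ℝ) : ℝ := ∑' j : ℤ, (∫ y, g y * haar j i y) * haar j i x

/-- The directional derivative `D^s_m f = Σ_{h ∈ H} m(h) |I(h)|^{-s} ⟨f, h⟩ h`. -/
def Dsm (s : ℝ) (m : ℤ × ℕ → ℝ) (f : ℝ → ℝ) (x : ℝ) : ℝ :=
  ∑' p : ℤ × ℕ,
    m p * ((volume (dyI p.1 p.2)).toReal ^ (-s) * (∫ y, f y * haar p.1 p.2 y)) * haar p.1 p.2 x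

/-- The Haar multiplier `T_m g = Σ_{h ∈ H} m(h) ⟨g, h⟩ h`. -/
def Tm (m : ℤ × ℕ → ℝ) (g : ℝ → ℝ) (x : ℝ) : ℝ :=
  ∑' p : ℤ × ℕ, m p * (∫ y, g y * haar p.1 p.2 y) * haar p.1 p.2 x

/-- The component kernels `K_{(i)}(x,y) = Σ_{j ∈ ℤ} h^j_i(x) h^j_i(y)`. -/
def Kker (i : ℕ) (x y : ℝ) : ℝ := ∑' j : ℤ, haar j i x * haar j i y

open Classical in
/-- The multiplier `m_i` with `m_i(I^j_k) = 1` if `k = i` and `0` otherwise. -/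
def mInd (i : ℕ) (I : Set ℝ) : ℝ := if ∃ j : ℤ, I = dyI j i then 1 else 0

/-- The dyadic energy form `E^δ_s(f)`. -/
def dyEnergy (s : ℝ) (f : ℝ → ℝ) : ℝ :=
  ∫ x in Set.Ici (0 : ℝ), ∫ y in Set.Ici (0 : ℝ), (f x - f y) ^ 2 * dyDist x y ^ (-(1 + 2 * s))


def fl (j : ℤ) (x : ℝ) : ℕ := ⌊(2:ℝ) ^ j * x⌋₊

lemma mem_dyI' (j : ℤ) (k : ℕ) (x : ℝ) :
    x ∈ dyI j k ↔ (k:ℝ) ≤ 2 ^ j * x ∧ 2 ^ j * x < k + 1 := by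
  have h : (0:ℝ) < 2 ^ j := by positivity
  rw [dyI, Set.mem_Ico, zpow_neg, ← div_eq_mul_inv, ← div_eq_mul_inv, div_le_iff₀ h,
    lt_div_iff₀ h, mul_comm x]

lemma mem_dyI (j : ℤ) (k : ℕ) (x : ℝ) : x ∈ dyI j k ↔ 0 ≤ x ∧ fl j x = k := by
  have h : (0:ℝ) < 2 ^ j := by positivity
  rw [mem_dyI']
  constructor
  · rintro ⟨h1, h2⟩
    have h3 : (0:ℝ) ≤ 2 ^ j * x := le_trans (Nat.cast_nonneg k) h1
    exact ⟨nonneg_of_mul_nonneg_right h3 h, (Nat.floor_eq_iff h3).2 ⟨h1, h2⟩⟩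
  · rintro ⟨h1, h2⟩
    exact (Nat.floor_eq_iff (by positivity)).1 h2

lemma fl_div (j : ℤ) (l : ℕ) (x : ℝ) : fl (j - l) x = fl j x / 2 ^ l := by
  unfold fl
  rw [← Nat.floor_div_natCast]
  congr 1
  rw [zpow_sub₀ (by norm_num)]
  push_cast
  rw [zpow_natCast]
  ring

lemma fl_succ (j : ℤ) (x : ℝ) : fl j x = fl (j + 1) x / 2 := by
  have := fl_div (j + 1) 1 x
  simpa using this

lemma fl_mono {i j : ℤ} (h : i ≤ j) {x y : ℝ} (hxy : fl j x = fl j y) : fl i x = fl i y := by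
  obtain ⟨l, hl⟩ := Int.le.dest h
  have : i = j - l := by omega
  rw [this, fl_div, fl_div, hxy]

lemma left_mem (j : ℤ) (k : ℕ) : (k:ℝ) * 2 ^ (-j) ∈ dyI j k := by
  have h : (0:ℝ) < 2 ^ (-j) := by positivity
  rw [dyI, Set.mem_Ico]
  exact ⟨le_rfl, by nlinarith⟩

lemma vol_dyI (j : ℤ) (k : ℕ) : volume (dyI j k) = ENNReal.ofReal (2 ^ (-j)) := by
  rw [dyI, Real.volume_Ico]; congr 1; ring

lemma vol_dyI' (j : ℤ) (k : ℕ) : (volume (dyI j k)).toReal = 2 ^ (-j) := by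
  rw [vol_dyI, ENNReal.toReal_ofReal (by positivity)]

lemma meas_dyI (j : ℤ) (k : ℕ) : MeasurableSet (dyI j k) := measurableSet_Ico

lemma dyI_sub (j : ℤ) (k : ℕ) : dyI j k ⊆ Ici 0 := fun x hx => ((mem_dyI j k x).1 hx).1

lemma dyDist_symm (x y : ℝ) : dyDist x y = dyDist y x := by
  have : dyInt x y = dyInt y x := by
    unfold dyInt; congr 1; ext I; simp only [Set.mem_setOf_eq]; tauto
  unfold dyDist; rw [this]; simp only [eq_comm]

lemma dyDist_eq {x y : ℝ} (hx : 0 ≤ x) (hy : 0 ≤ y) {j : ℤ} (h1 : fl j y = fl j x)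
    (h2 : fl (j + 1) y ≠ fl (j + 1) x) : dyDist x y = 2 ^ (-j) := by
  have hne : x ≠ y := by rintro rfl; exact h2 rfl
  have : dyInt x y = dyI j (fl j x) := by
    apply Subset.antisymm
    · apply Set.sInter_subset_of_mem
      exact ⟨⟨j, _, rfl⟩, (mem_dyI _ _ _).2 ⟨hx, rfl⟩, (mem_dyI _ _ _).2 ⟨hy, h1⟩⟩
    · apply Set.subset_sInter
      rintro _ ⟨⟨i, k, rfl⟩, hxi, hyi⟩ z hz
      rw [mem_dyI] at hxi hyi hz ⊢
      refine ⟨hz.1, ?_⟩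
      have hij : i ≤ j := by
        by_contra hc
        exact h2 (fl_mono (i := j + 1) (j := i) (by omega) (by rw [hyi.2, hxi.2]))
      rw [fl_mono hij hz.2, hxi.2]
  rw [dyDist, if_neg hne, this, vol_dyI']

lemma dyDist_const {x y y' : ℝ} {j : ℤ} {k : ℕ} (hx : x ∉ dyI j k) (hy : y ∈ dyI j k)
    (hy' : y' ∈ dyI j k) : dyDist x y = dyDist x y' := by
  have key : ∀ y y' : ℝ, y ∈ dyI j k → y' ∈ dyI j k → ∀ I, (IsDyadic I ∧ x ∈ I ∧ y ∈ I) →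
      (IsDyadic I ∧ x ∈ I ∧ y' ∈ I) := by
    rintro y y' hy hy' _ ⟨⟨i, m, rfl⟩, hxi, hyi⟩
    refine ⟨⟨i, m, rfl⟩, hxi, ?_⟩
    rw [mem_dyI] at *
    refine ⟨hy'.1, ?_⟩
    have hij : i ≤ j := by
      by_contra hc
      apply hx
      refine ⟨hxi.1, ?_⟩
      rw [← hy.2]
      exact fl_mono (i := j) (j := i) (by omega) (by rw [hyi.2, hxi.2])
    rw [← hyi.2]
    exact fl_mono hij (by rw [hy.2, hy'.2])
  have h1 : dyInt x y = dyInt x y' := by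
    unfold dyInt; congr 1; ext I
    exact ⟨key y y' hy hy' I, key y' y hy' hy I⟩
  have n1 : x ≠ y := by rintro rfl; exact hx hy
  have n2 : x ≠ y' := by rintro rfl; exact hx hy'
  rw [dyDist, dyDist, if_neg n1, if_neg n2, h1]

/-- the kernel -/
def KK (s x y : ℝ) : ℝ := dyDist x y ^ (-(1 + 2 * s))

lemma KK_symm (s x y : ℝ) : KK s x y = KK s y x := by rw [KK, KK, dyDist_symm]

lemma KK_const {s x y y' : ℝ} {j : ℤ} {k : ℕ} (hx : x ∉ dyI j k) (hy : y ∈ dyI j k)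
    (hy' : y' ∈ dyI j k) : KK s x y = KK s x y' := by rw [KK, KK, dyDist_const hx hy hy']

/-- powers of two -/
def PP (t : ℝ) (j : ℤ) : ℝ := (2:ℝ) ^ (t * (j:ℝ))

lemma PP_pos (t : ℝ) (j : ℤ) : 0 < PP t j := by unfold PP; positivity
lemma PP_add (t : ℝ) (i j : ℤ) : PP t (i + j) = PP t i * PP t j := by
  unfold PP; rw [← Real.rpow_add (by norm_num)]; push_cast; ring_nf
lemma PP_one (j : ℤ) : PP 1 j = 2 ^ j := by unfold PP; rw [one_mul, Real.rpow_intCast]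
lemma PP_mul (t u : ℝ) (j : ℤ) : PP t j * PP u j = PP (t + u) j := by
  unfold PP; rw [← Real.rpow_add (by norm_num)]; ring_nf
lemma zpow_rpow (t : ℝ) (j : ℤ) : ((2:ℝ) ^ (-j)) ^ (-t) = PP t j := by
  unfold PP; rw [← Real.rpow_intCast, ← Real.rpow_mul (by norm_num)]; push_cast; ring_nf

lemma KK_eq {s x y : ℝ} (hx : 0 ≤ x) (hy : 0 ≤ y) {j : ℤ} (h1 : fl j y = fl j x)
    (h2 : fl (j + 1) y ≠ fl (j + 1) x) : KK s x y = PP (1 + 2 * s) j := by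
  rw [KK, dyDist_eq hx hy h1 h2, zpow_rpow]

lemma PP_half (s : ℝ) (j : ℤ) : (2:ℝ) ^ (-(j + 1)) * PP (1 + 2 * s) j = PP (2 * s) j / 2 := by
  have h : (2:ℝ) ^ (-(j+1)) = PP (-1) j / 2 := by
    unfold PP
    rw [neg_add, zpow_add₀ (by norm_num), ← Real.rpow_intCast]
    push_cast; rw [neg_one_mul]; norm_num; ring
  rw [h, div_mul_eq_mul_div, PP_mul]; ring_nf

/-- ring -/
def RR (x : ℝ) (j : ℤ) : Set ℝ := dyI j (fl j x) \ dyI (j + 1) (fl (j + 1) x)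

lemma meas_RR (x : ℝ) (j : ℤ) : MeasurableSet (RR x j) := (meas_dyI _ _).diff (meas_dyI _ _)

lemma dyI_succ_sub (j : ℤ) (k : ℕ) : dyI (j + 1) k ⊆ dyI j (k / 2) := by
  intro y hy
  rw [mem_dyI] at *
  rw [fl_succ, hy.2]; exact ⟨hy.1, rfl⟩

lemma vol_RR (x : ℝ) (j : ℤ) : volume (RR x j) = ENNReal.ofReal (2 ^ (-(j + 1))) := by
  rw [RR, measure_diff _ (meas_dyI _ _).nullMeasurableSet (by rw [vol_dyI]; simp), vol_dyI, vol_dyI,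
    ← ENNReal.ofReal_sub _ (by positivity)]
  · congr 1
    rw [neg_add, zpow_add₀ (by norm_num)]; norm_num; ring
  · rw [fl_succ j x]; exact dyI_succ_sub _ _

lemma RR_iff {x y : ℝ} {j : ℤ} :
    y ∈ RR x j ↔ 0 ≤ y ∧ fl j y = fl j x ∧ fl (j + 1) y ≠ fl (j + 1) x := by
  rw [RR, mem_diff, mem_dyI, mem_dyI]; tauto

lemma KK_RR {s x y : ℝ} (hx : 0 ≤ x) {j : ℤ} (hy : y ∈ RR x j) : KK s x y = PP (1 + 2 * s) j := by
  rw [RR_iff] at hy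
  exact KK_eq hx hy.1 hy.2.1 hy.2.2

lemma int_RR {s x : ℝ} (hx : 0 ≤ x) (j : ℤ) : IntegrableOn (KK s x) (RR x j) ∧
    (∫ y in RR x j, KK s x y = PP (2 * s) j / 2) ∧ (∫ y in RR x j, ‖KK s x y‖ = PP (2 * s) j / 2) := by
  refine ⟨?_, ?_, ?_⟩
  · rw [integrableOn_congr_fun (fun y hy => KK_RR hx hy) (meas_RR x j)]
    exact integrableOn_const (by rw [vol_RR]; simp)
  · rw [setIntegral_congr_fun (meas_RR x j) (fun y hy => KK_RR hx hy), setIntegral_const,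
      Measure.real, vol_RR, ENNReal.toReal_ofReal (by positivity), smul_eq_mul, PP_half]
  · rw [setIntegral_congr_fun (g := fun _ => PP (1 + 2 * s) j) (meas_RR x j)
      (fun y hy => by simp only [KK_RR hx hy]; rw [Real.norm_of_nonneg (PP_pos _ _).le]), setIntegral_const,
      Measure.real, vol_RR, ENNReal.toReal_ofReal (by positivity), smul_eq_mul, PP_half]

lemma fl_zero (x : ℝ) (hx : 0 ≤ x) : ∃ n : ℕ, fl (-(n:ℤ)) x = 0 := by
  obtain ⟨n, hn⟩ := pow_unbounded_of_one_lt x (by norm_num : (1:ℝ) < 2)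
  refine ⟨n, ?_⟩
  unfold fl
  rw [Nat.floor_eq_zero, zpow_neg, zpow_natCast, inv_mul_lt_iff₀ (by positivity)]
  simpa using hn

lemma CC_eq (x : ℝ) (hx : 0 ≤ x) (j : ℤ) :
    Ici 0 \ dyI j (fl j x) = ⋃ l : ℕ, RR x (j - (l + 1 : ℕ)) := by
  ext y
  simp only [mem_iUnion, RR_iff, mem_diff, mem_Ici, mem_dyI]
  constructor
  · rintro ⟨hy, h⟩
    have h' : fl j y ≠ fl j x := fun h2 => h ⟨hy, h2⟩
    have ex : ∃ l : ℕ, fl (j - l) y = fl (j - l) x := by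
      obtain ⟨n, hn⟩ := fl_zero x hx
      obtain ⟨m, hm⟩ := fl_zero y hy
      refine ⟨(j + n + m).toNat, ?_⟩
      have e : ∀ (z : ℝ) (n : ℕ), fl (-(n:ℤ)) z = 0 → ∀ i : ℤ, i ≤ -n → fl i z = 0 := by
        intro z n hz i hi
        have h0 : ∀ i, fl i 0 = 0 := fun i => by simp [fl]
        rw [← h0 i]; exact fl_mono hi (by rw [hz, h0])
      rw [e x n hn _ (by omega), e y m hm _ (by omega)]
    classical
    have hf := Nat.find_spec ex
    have hpos : Nat.find ex ≠ 0 := by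
      intro h0
      rw [h0] at hf
      exact h' (by simpa using hf)
    obtain ⟨l, hl⟩ := Nat.exists_eq_succ_of_ne_zero hpos
    have hlt := Nat.find_min ex (m := l) (by omega)
    rw [hl] at hf
    refine ⟨l, hy, hf, ?_⟩
    have : j - ((l + 1 : ℕ):ℤ) + 1 = j - l := by push_cast; ring
    rwa [this]
  · rintro ⟨l, hy, h1, h2⟩
    refine ⟨hy, fun h => h2 ?_⟩
    exact fl_mono (by push_cast; omega) h.2

lemma RR_disj (x : ℝ) (j : ℤ) :
    Pairwise (Function.onFun Disjoint (fun l : ℕ => RR x (j - (l + 1 : ℕ)))) := by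
  have key : ∀ a b : ℤ, a < b → ∀ y, y ∈ RR x a → y ∈ RR x b → False := by
    intro a b hab y ha hb
    rw [RR_iff] at ha hb
    exact ha.2.2 (fl_mono (by omega) hb.2.1)
  intro a b hab
  rw [Function.onFun, Set.disjoint_left]
  intro y ha hb
  rcases lt_or_gt_of_ne hab with h | h
  · exact key _ _ (by push_cast; omega) y hb ha
  · exact key _ _ (by push_cast; omega) y ha hb

/-- the basic constant -/
def aa (s : ℝ) : ℝ := ∑' l : ℕ, PP (2 * s) (-(l + 1 : ℕ)) / 2

lemma aa_nonneg (s : ℝ) : 0 ≤ aa s := tsum_nonneg fun l => by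
  have := PP_pos (2 * s) (-(l + 1 : ℕ)); positivity

lemma summ_PP {s : ℝ} (hs : 0 < s) : Summable fun l : ℕ => PP (2 * s) (-(l + 1 : ℕ)) / 2 := by
  have h : Summable fun l : ℕ => ((2:ℝ) ^ (-(2 * s))) ^ l :=
    summable_geometric_of_lt_one (by positivity) (Real.rpow_lt_one_of_one_lt_of_neg (by norm_num) (by linarith))
  apply Summable.div_const
  rw [← summable_nat_add_iff 1] at h
  refine h.congr fun l => ?_
  unfold PP
  rw [← Real.rpow_natCast, ← Real.rpow_mul (by norm_num)]
  push_cast; ring_nf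

lemma int_CC {s x : ℝ} (hs : 0 < s) (hx : 0 ≤ x) (j : ℤ) :
    IntegrableOn (KK s x) (Ici 0 \ dyI j (fl j x)) ∧
    ∫ y in Ici 0 \ dyI j (fl j x), KK s x y = PP (2 * s) j * aa s := by
  have e : ∀ l : ℕ, PP (2 * s) (j - (l + 1 : ℕ)) / 2 = PP (2 * s) j * (PP (2 * s) (-(l + 1 : ℕ)) / 2) := by
    intro l
    rw [sub_eq_add_neg, PP_add]; ring
  rw [CC_eq x hx]
  have hi : IntegrableOn (KK s x) (⋃ l : ℕ, RR x (j - (l + 1 : ℕ))) := by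
    apply integrableOn_iUnion_of_summable_integral_norm
    · exact fun l => (int_RR hx _).1
    · simp_rw [fun l : ℕ => (int_RR (s := s) hx (j - (l + 1 : ℕ))).2.2, e]
      exact (summ_PP hs).mul_left _
  refine ⟨hi, ?_⟩
  rw [integral_iUnion (fun l => meas_RR _ _) (RR_disj x j) hi]
  simp_rw [fun l : ℕ => (int_RR (s := s) hx (j - (l + 1 : ℕ))).2.1, e]
  rw [tsum_mul_left, aa]

/-- indicator of a dyadic interval -/
def ind (j : ℤ) (k : ℕ) (x : ℝ) : ℝ := (dyI j k).indicator (fun _ => (1:ℝ)) x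

/-- Lebesgue measure on the half-line -/
abbrev mu : Measure ℝ := volume.restrict (Ici (0:ℝ))

/-- `u` is the image of `g` under the nonlocal operator with kernel `KK`. -/
def IsL (s : ℝ) (g u : ℝ → ℝ) : Prop :=
  ∀ x, 0 ≤ x → Integrable (fun y => (g x - g y) * KK s x y) mu ∧
    ∫ y, (g x - g y) * KK s x y ∂mu = u x

lemma IsL.smul {s : ℝ} {g u : ℝ → ℝ} (h : IsL s g u) (c : ℝ) :
    IsL s (fun x => c * g x) (fun x => c * u x) := by
  intro x hx
  have e : (fun y => (c * g x - c * g y) * KK s x y) = fun y => c * ((g x - g y) * KK s x y) := by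
    ext y; ring
  rw [e, integral_const_mul, (h x hx).2]
  exact ⟨(h x hx).1.const_mul c, rfl⟩

lemma IsL.sub {s : ℝ} {g u g' u' : ℝ → ℝ} (h : IsL s g u) (h' : IsL s g' u') :
    IsL s (fun x => g x - g' x) (fun x => u x - u' x) := by
  intro x hx
  have e : (fun y => (g x - g' x - (g y - g' y)) * KK s x y) =
      fun y => (g x - g y) * KK s x y - (g' x - g' y) * KK s x y := by
    ext y; ring
  rw [e, integral_sub (h x hx).1 (h' x hx).1, (h x hx).2, (h' x hx).2]
  exact ⟨(h x hx).1.sub (h' x hx).1, rfl⟩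

/-- image of an indicator -/
def UU (s : ℝ) (j : ℤ) (k : ℕ) (x : ℝ) : ℝ :=
  (dyI j k).indicator (fun _ => PP (2 * s) j * aa s) x -
    (2:ℝ) ^ (-j) * (Ici 0 \ dyI j k).indicator (fun x => KK s ((k:ℝ) * 2 ^ (-j)) x) x

lemma IsL_ind {s : ℝ} (hs : 0 < s) (j : ℤ) (k : ℕ) : IsL s (ind j k) (UU s j k) := by
  intro x hx
  by_cases hxk : x ∈ dyI j k
  · have hk := (mem_dyI _ _ _).1 hxk
    obtain ⟨h1, h2⟩ := int_CC hs hx j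
    rw [hk.2] at h1 h2
    have hm : MeasurableSet (Ici 0 \ dyI j k) := measurableSet_Ici.diff (meas_dyI j k)
    have e : (fun y => (ind j k x - ind j k y) * KK s x y) =ᵐ[mu]
        (Ici 0 \ dyI j k).indicator (KK s x) := by
      filter_upwards [ae_restrict_mem measurableSet_Ici] with y hy
      by_cases hyk : y ∈ dyI j k
      · simp [ind, hxk, hyk]
      · have : y ∈ Ici 0 \ dyI j k := ⟨hy, hyk⟩
        simp [ind, hxk, hyk, indicator_of_mem this]
    have hss : (Ici 0 \ dyI j k) ∩ Ici 0 = Ici 0 \ dyI j k := by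
      ext y; simp only [mem_inter_iff, mem_sdiff]; tauto
    constructor
    · rw [integrable_congr e, integrable_indicator_iff hm, IntegrableOn, Measure.restrict_restrict hm,
        hss]
      exact h1
    · rw [integral_congr_ae e, integral_indicator hm, Measure.restrict_restrict hm, hss, h2]
      simp [UU, hxk]
  · have e : (fun y => (ind j k x - ind j k y) * KK s x y) =
        (dyI j k).indicator (fun _ => - KK s x ((k:ℝ) * 2 ^ (-j))) := by
      ext y
      by_cases hyk : y ∈ dyI j k
      · simp [ind, hxk, hyk, KK_const hxk hyk (left_mem j k)]
      · simp [ind, hxk, hyk]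
    have hmu : mu (dyI j k) = ENNReal.ofReal (2 ^ (-j)) := by
      rw [Measure.restrict_apply (meas_dyI j k), inter_eq_left.2 (dyI_sub j k), vol_dyI]
    rw [e]
    constructor
    · rw [integrable_indicator_iff (meas_dyI j k)]
      exact integrableOn_const (by rw [hmu]; simp)
    · rw [integral_indicator (meas_dyI j k), setIntegral_const, Measure.real, hmu,
        ENNReal.toReal_ofReal (by positivity)]
      have : x ∈ Ici 0 \ dyI j k := ⟨hx, hxk⟩
      rw [UU, indicator_of_notMem hxk, indicator_of_mem this, KK_symm, smul_eq_mul]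
      ring

lemma UU_int {s : ℝ} (hs : 0 < s) (j : ℤ) (k : ℕ) :
    Integrable (UU s j k) mu ∧ ∫ x, UU s j k x ∂mu = 0 := by
  have hl := left_mem j k
  have hl' := (mem_dyI _ _ _).1 hl
  obtain ⟨h1, h2⟩ := int_CC hs hl'.1 j
  rw [hl'.2] at h1 h2
  have hm : MeasurableSet (Ici 0 \ dyI j k) := measurableSet_Ici.diff (meas_dyI j k)
  have hss : (Ici 0 \ dyI j k) ∩ Ici 0 = Ici 0 \ dyI j k := by
    ext y; simp only [mem_inter_iff, mem_sdiff]; tauto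
  have hmu : mu (dyI j k) = ENNReal.ofReal (2 ^ (-j)) := by
    rw [Measure.restrict_apply (meas_dyI j k), inter_eq_left.2 (dyI_sub j k), vol_dyI]
  have i1 : Integrable (fun x => (dyI j k).indicator (fun _ => PP (2 * s) j * aa s) x) mu := by
    rw [integrable_indicator_iff (meas_dyI j k)]
    exact integrableOn_const (by rw [hmu]; simp)
  have i2 : Integrable (fun x => (Ici 0 \ dyI j k).indicator
      (fun x => KK s ((k:ℝ) * 2 ^ (-j)) x) x) mu := by
    rw [integrable_indicator_iff hm, IntegrableOn, Measure.restrict_restrict hm, hss]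
    exact h1
  refine ⟨i1.sub (i2.const_mul _), ?_⟩
  unfold UU
  rw [integral_sub i1 (i2.const_mul _), integral_const_mul, integral_indicator (meas_dyI j k),
    integral_indicator hm, Measure.restrict_restrict hm, hss, h2, setIntegral_const, Measure.real, hmu,
    ENNReal.toReal_ofReal (by positivity), smul_eq_mul, sub_self]

/-- functions whose image integrates to zero -/
def ZZ (s : ℝ) (g : ℝ → ℝ) : Prop :=
  ∃ u, IsL s g u ∧ Integrable u mu ∧ ∫ x, u x ∂mu = 0

lemma ZZ.smul {s : ℝ} {g : ℝ → ℝ} (h : ZZ s g) (c : ℝ) : ZZ s (fun x => c * g x) := by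
  obtain ⟨u, h1, h2, h3⟩ := h
  exact ⟨_, h1.smul c, h2.const_mul c, by rw [integral_const_mul, h3, mul_zero]⟩

lemma ZZ.sub {s : ℝ} {g g' : ℝ → ℝ} (h : ZZ s g) (h' : ZZ s g') : ZZ s (fun x => g x - g' x) := by
  obtain ⟨u, h1, h2, h3⟩ := h
  obtain ⟨u', h1', h2', h3'⟩ := h'
  exact ⟨_, h1.sub h1', h2.sub h2', by rw [integral_sub h2 h2', h3, h3', sub_zero]⟩

lemma ZZ_ind {s : ℝ} (hs : 0 < s) (j : ℤ) (k : ℕ) : ZZ s (ind j k) :=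
  ⟨_, IsL_ind hs j k, UU_int hs j k⟩

lemma ind_mul_of_le {i j : ℤ} (h : i ≤ j) (m k : ℕ) :
    (∀ x, ind i m x * ind j k x = ind j k x) ∨ (∀ x, ind i m x * ind j k x = 0) := by
  have key : ∀ x ∈ dyI j k, ∀ y ∈ dyI j k, x ∈ dyI i m → y ∈ dyI i m := by
    intro x hx y hy hxi
    rw [mem_dyI] at *
    refine ⟨hy.1, ?_⟩
    rw [← hxi.2]; exact fl_mono h (by rw [hx.2, hy.2])
  by_cases hl : (k:ℝ) * 2 ^ (-j) ∈ dyI i m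
  · left
    intro x
    by_cases hx : x ∈ dyI j k
    · simp [ind, hx, key _ (left_mem j k) _ hx hl]
    · simp [ind, hx]
  · right
    intro x
    by_cases hx : x ∈ dyI j k
    · have : x ∉ dyI i m := fun h => hl (key _ hx _ (left_mem j k) h)
      simp [ind, this]
    · simp [ind, hx]

lemma ZZ_ind_mul {s : ℝ} (hs : 0 < s) (i j : ℤ) (m k : ℕ) :
    ZZ s (fun x => ind i m x * ind j k x) := by
  have main : ∀ (i j : ℤ) (m k : ℕ), i ≤ j → ZZ s (fun x => ind i m x * ind j k x) := by
    intro i j m k h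
    rcases ind_mul_of_le h m k with h | h
    · simp_rw [h]; exact ZZ_ind hs j k
    · simp_rw [h]
      simpa using (ZZ_ind hs j k).smul 0
  rcases le_total i j with h | h
  · exact main _ _ _ _ h
  · simp_rw [mul_comm (ind i m _)]; exact main _ _ _ _ h

lemma haar_eq (j : ℤ) (k : ℕ) (x : ℝ) :
    haar j k x = (2:ℝ) ^ ((j:ℝ) / 2) * (ind (j + 1) (2 * k) x - ind (j + 1) (2 * k + 1) x) := by
  have h2 : (2:ℝ) ^ (j + 1) * x = 2 * (2 ^ j * x) := by
    rw [zpow_add₀ (by norm_num)]; ring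
  have e1 : x ∈ dyI (j + 1) (2 * k) ↔ 2 ^ j * x - (k:ℝ) ∈ Ico (0:ℝ) (1 / 2) := by
    rw [mem_dyI', h2, mem_Ico]; push_cast
    constructor <;> rintro ⟨h, h'⟩ <;> constructor <;> linarith
  have e2 : x ∈ dyI (j + 1) (2 * k + 1) ↔ 2 ^ j * x - (k:ℝ) ∈ Ico (1 / 2:ℝ) 1 := by
    rw [mem_dyI', h2, mem_Ico]; push_cast
    constructor <;> rintro ⟨h, h'⟩ <;> constructor <;> linarith
  classical
  rw [haar, haar0, ind, ind]
  simp only [indicator_apply, e1, e2]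

lemma ZZ_haar_mul {s : ℝ} (hs : 0 < s) (i j : ℤ) (m k : ℕ) :
    ZZ s (fun x => haar i m x * haar j k x) := by
  have h := ((((ZZ_ind_mul hs (i+1) (j+1) (2*m) (2*k)).sub
    (ZZ_ind_mul hs (i+1) (j+1) (2*m) (2*k+1))).sub
    ((ZZ_ind_mul hs (i+1) (j+1) (2*m+1) (2*k)).sub
    (ZZ_ind_mul hs (i+1) (j+1) (2*m+1) (2*k+1)))).smul
      ((2:ℝ) ^ ((j:ℝ) / 2))).smul ((2:ℝ) ^ ((i:ℝ) / 2))
  convert! h using 2 with x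
  rw [haar_eq, haar_eq]; ring

/-- eigenvalue constant -/
def lam (s : ℝ) : ℝ := PP (2 * s) 1 * aa s + 1 / 2

lemma lam_pos (s : ℝ) : 0 < lam s := by
  have := mul_nonneg (PP_pos (2 * s) 1).le (aa_nonneg s)
  unfold lam; linarith

lemma mem_children (j : ℤ) (k : ℕ) (x : ℝ) :
    x ∈ dyI j k ↔ x ∈ dyI (j + 1) (2 * k) ∨ x ∈ dyI (j + 1) (2 * k + 1) := by
  simp only [mem_dyI]
  rw [fl_succ j x, ← and_or_left]
  apply and_congr_right; intro _
  omega

lemma UU_haar (s : ℝ) (j : ℤ) (k : ℕ) (x : ℝ) (hx : 0 ≤ x) :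
    UU s (j + 1) (2 * k) x - UU s (j + 1) (2 * k + 1) x =
      PP (2 * s) j * lam s * (ind (j + 1) (2 * k) x - ind (j + 1) (2 * k + 1) x) := by
  have hl1 := left_mem (j + 1) (2 * k)
  have hl2 := left_mem (j + 1) (2 * k + 1)
  have disj : ∀ y, y ∈ dyI (j + 1) (2 * k) → y ∉ dyI (j + 1) (2 * k + 1) := by
    intro y h1 h2
    rw [mem_dyI] at h1 h2
    omega
  have kk : ∀ y z, y ∈ dyI (j + 1) (2 * k) → z ∈ dyI (j + 1) (2 * k + 1) →
      KK s z y = PP (1 + 2 * s) j := by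
    intro y z hy hz
    rw [mem_dyI] at hy hz
    apply KK_eq hz.1 hy.1
    · rw [fl_succ j y, fl_succ j z, hy.2, hz.2]; omega
    · rw [hy.2, hz.2]; omega
  unfold UU ind
  set l1 : ℝ := ((2 * k : ℕ) : ℝ) * 2 ^ (-(j+1)) with hl1d
  set l2 : ℝ := ((2 * k + 1 : ℕ) : ℝ) * 2 ^ (-(j+1)) with hl2d
  have hP := PP_half s j
  have hA : PP (2 * s) (j + 1) = PP (2 * s) j * PP (2 * s) 1 := PP_add _ _ _
  have hx' : x ∈ Ici (0:ℝ) := hx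
  by_cases h1 : x ∈ dyI (j + 1) (2 * k)
  · have h2 := disj x h1
    have := kk x l2 h1 hl2
    simp only [h1, h2, indicator_of_mem, indicator_of_notMem, not_false_eq_true, mem_sdiff, hx',
      not_true_eq_false, and_false, and_self, this, lam, hA]
    linear_combination hP
  · by_cases h2 : x ∈ dyI (j + 1) (2 * k + 1)
    · have := kk l1 x hl1 h2
      rw [KK_symm] at this
      simp only [h1, h2, indicator_of_mem, indicator_of_notMem, not_false_eq_true, mem_sdiff, hx',
        not_true_eq_false, and_false, and_self, this, lam, hA]
      linear_combination - hP
    · have hn : x ∉ dyI j k := by rw [mem_children]; tauto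
      have := KK_const (s := s) hn ((mem_children j k _).2 (Or.inl hl1)) ((mem_children j k _).2 (Or.inr hl2))
      rw [KK_symm, KK_symm s x] at this
      simp only [h1, h2, indicator_of_mem, indicator_of_notMem, not_false_eq_true, mem_sdiff, hx',
        and_self, this]
      ring

lemma IsL_haar {s : ℝ} (hs : 0 < s) (j : ℤ) (k : ℕ) :
    IsL s (haar j k) (fun x => PP (2 * s) j * lam s * haar j k x) := by
  have h := ((IsL_ind hs (j+1) (2*k)).sub (IsL_ind hs (j+1) (2*k+1))).smul ((2:ℝ) ^ ((j:ℝ) / 2))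
  intro x hx
  have := h x hx
  simp only [← haar_eq] at this
  refine ⟨this.1, ?_⟩
  rw [this.2, UU_haar s j k x hx]
  simp only [haar_eq]; ring

lemma ind_int (j : ℤ) (k : ℕ) : Integrable (ind j k) ∧ ∫ x, ind j k x = 2 ^ (-j) := by
  unfold ind
  refine ⟨?_, ?_⟩
  · rw [integrable_indicator_iff (meas_dyI j k)]
    exact integrableOn_const (by rw [vol_dyI]; simp)
  · rw [integral_indicator (meas_dyI j k), setIntegral_const, Measure.real, vol_dyI']; simp

lemma haar_int (j : ℤ) (k : ℕ) : Integrable (haar j k) ∧ ∫ x, haar j k x = 0 := by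
  have e : haar j k = fun x => (2:ℝ) ^ ((j:ℝ) / 2) * (ind (j + 1) (2 * k) x - ind (j + 1) (2 * k + 1) x) :=
    funext (haar_eq j k)
  rw [e]
  refine ⟨((ind_int _ _).1.sub (ind_int _ _).1).const_mul _, ?_⟩
  rw [integral_const_mul, integral_sub (ind_int _ _).1 (ind_int _ _).1, (ind_int _ _).2, (ind_int _ _).2]
  simp

lemma haar_supp {j : ℤ} {k : ℕ} {x : ℝ} (hx : x ∉ dyI j k) : haar j k x = 0 := by
  rw [mem_children] at hx
  push Not at hx
  rw [haar_eq]; simp [ind, hx.1, hx.2]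

lemma haar_const {i j : ℤ} (h : i < j) (m k : ℕ) {x y : ℝ} (hx : x ∈ dyI j k) (hy : y ∈ dyI j k) :
    haar i m x = haar i m y := by
  rw [haar_eq, haar_eq]
  classical
  have key : ∀ n, x ∈ dyI (i+1) n ↔ y ∈ dyI (i+1) n := by
    intro n
    rw [mem_dyI] at hx hy
    rw [mem_dyI, mem_dyI]
    rw [fl_mono (i := i + 1) (j := j) (by omega) (show fl j x = fl j y by rw [hx.2, hy.2])]
    tauto
  simp only [ind, indicator_apply, key]

lemma haar_orth_lt {i j : ℤ} (h : i < j) (m k : ℕ) :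
    Integrable (fun x => haar i m x * haar j k x) ∧ ∫ x, haar i m x * haar j k x = 0 := by
  have e : (fun x => haar i m x * haar j k x) =
      fun x => haar i m ((k:ℝ) * 2 ^ (-j)) * haar j k x := by
    ext x
    by_cases hx : x ∈ dyI j k
    · rw [haar_const h m k hx (left_mem j k)]
    · rw [haar_supp hx]; simp
  rw [e, integral_const_mul, (haar_int j k).2, mul_zero]
  exact ⟨(haar_int j k).1.const_mul _, rfl⟩

lemma haar_sq (j : ℤ) (k : ℕ) (x : ℝ) :
    haar j k x * haar j k x = 2 ^ j * (ind (j + 1) (2 * k) x + ind (j + 1) (2 * k + 1) x) := by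
  have hp : (2:ℝ) ^ ((j:ℝ) / 2) * (2:ℝ) ^ ((j:ℝ) / 2) = 2 ^ j := by
    rw [← Real.rpow_add (by norm_num), add_halves, Real.rpow_intCast]
  have hi : (ind (j + 1) (2 * k) x - ind (j + 1) (2 * k + 1) x) *
      (ind (j + 1) (2 * k) x - ind (j + 1) (2 * k + 1) x) =
      ind (j + 1) (2 * k) x + ind (j + 1) (2 * k + 1) x := by
    by_cases h1 : x ∈ dyI (j + 1) (2 * k)
    · have h2 : x ∉ dyI (j + 1) (2 * k + 1) := by
        rw [mem_dyI] at *; omega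
      simp [ind, h1, h2]
    · by_cases h2 : x ∈ dyI (j + 1) (2 * k + 1) <;> simp [ind, h1, h2]
  rw [haar_eq, ← hp, ← hi]; ring

lemma haar_orth (p q : ℤ × ℕ) :
    Integrable (fun x => haar p.1 p.2 x * haar q.1 q.2 x) ∧
      ∫ x, haar p.1 p.2 x * haar q.1 q.2 x = if p = q then 1 else 0 := by
  rcases lt_trichotomy p.1 q.1 with h | h | h
  · rw [if_neg (by rintro rfl; exact lt_irrefl _ h)]
    exact haar_orth_lt h _ _
  · by_cases hk : p.2 = q.2
    · have : p = q := Prod.ext h hk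
      subst this
      simp_rw [haar_sq]
      refine ⟨((ind_int _ _).1.add (ind_int _ _).1).const_mul _, ?_⟩
      rw [integral_const_mul, integral_add (ind_int _ _).1 (ind_int _ _).1, (ind_int _ _).2,
        (ind_int _ _).2, if_pos trivial, neg_add, zpow_add₀ (by norm_num), zpow_neg]
      have : (2:ℝ) ^ p.1 ≠ 0 := by positivity
      field_simp; norm_num
    · rw [if_neg (by rintro rfl; exact hk rfl)]
      have : (fun x => haar p.1 p.2 x * haar q.1 q.2 x) = fun _ => 0 := by
        ext x
        by_cases hx : x ∈ dyI p.1 p.2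
        · have : x ∉ dyI q.1 q.2 := by
            rw [mem_dyI] at *; rw [← h]; rintro ⟨-, h2⟩; exact hk (hx.2 ▸ h2)
          rw [haar_supp this, mul_zero]
        · rw [haar_supp hx, zero_mul]
      rw [this]; simp
  · rw [if_neg (by rintro rfl; exact lt_irrefl _ h)]
    simp_rw [mul_comm (haar p.1 p.2 _)]
    exact haar_orth_lt h _ _

lemma haar_orth_mu (p q : ℤ × ℕ) :
    Integrable (fun x => haar p.1 p.2 x * haar q.1 q.2 x) mu ∧
      ∫ x, haar p.1 p.2 x * haar q.1 q.2 x ∂mu = if p = q then 1 else 0 := by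
  refine ⟨(haar_orth p q).1.integrableOn, ?_⟩
  rw [← (haar_orth p q).2]
  apply setIntegral_eq_integral_of_forall_compl_eq_zero
  intro x hx
  rw [haar_supp (fun h => hx (dyI_sub _ _ h)), zero_mul]

/-- bilinear form -/
lemma bilin {s : ℝ} (hs : 0 < s) (p q : ℤ × ℕ) : ∃ M : ℝ → ℝ,
    (∀ x, 0 ≤ x → Integrable (fun y => (haar p.1 p.2 x - haar p.1 p.2 y) *
      (haar q.1 q.2 x - haar q.1 q.2 y) * KK s x y) mu ∧
      ∫ y, (haar p.1 p.2 x - haar p.1 p.2 y) *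
      (haar q.1 q.2 x - haar q.1 q.2 y) * KK s x y ∂mu = M x) ∧ Integrable M mu ∧
    ∫ x, M x ∂mu = if p = q then 2 * lam s * PP (2 * s) p.1 else 0 := by
  obtain ⟨u, hu, hui, hu0⟩ := ZZ_haar_mul hs p.1 q.1 p.2 q.2
  refine ⟨fun x => (PP (2 * s) q.1 * lam s + PP (2 * s) p.1 * lam s) *
    (haar p.1 p.2 x * haar q.1 q.2 x) - u x, ?_, ?_, ?_⟩
  · intro x hx
    have h1 := IsL_haar hs p.1 p.2 x hx
    have h2 := IsL_haar hs q.1 q.2 x hx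
    have h3 := hu x hx
    simp only at h1 h2 h3
    have e : (fun y => (haar p.1 p.2 x - haar p.1 p.2 y) *
      (haar q.1 q.2 x - haar q.1 q.2 y) * KK s x y) = fun y =>
      (haar p.1 p.2 x * ((haar q.1 q.2 x - haar q.1 q.2 y) * KK s x y) +
      haar q.1 q.2 x * ((haar p.1 p.2 x - haar p.1 p.2 y) * KK s x y)) -
      (haar p.1 p.2 x * haar q.1 q.2 x - haar p.1 p.2 y * haar q.1 q.2 y) * KK s x y := by
      ext y; ring
    have i1 := h1.1.const_mul (haar q.1 q.2 x)
    have i2 := h2.1.const_mul (haar p.1 p.2 x)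
    have i3 := i2.add i1
    simp only [Pi.add_def] at i3
    rw [e]
    refine ⟨i3.sub h3.1, ?_⟩
    rw [integral_sub i3 h3.1, integral_add i2 i1, integral_const_mul, integral_const_mul,
      h1.2, h2.2, h3.2]
    ring
  · exact ((haar_orth_mu p q).1.const_mul _).sub hui
  · rw [integral_sub ((haar_orth_mu p q).1.const_mul _) hui, hu0, integral_const_mul,
      (haar_orth_mu p q).2]
    split_ifs with h
    · subst h; ring
    · simp

lemma energy {s : ℝ} (hs : 0 < s) (F : Finset (ℤ × ℕ)) (c : ℤ × ℕ → ℝ) (f : ℝ → ℝ)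
    (hf : f = fun x => ∑ p ∈ F, c p * haar p.1 p.2 x) : ∃ M : ℝ → ℝ,
    (∀ x, 0 ≤ x → Integrable (fun y => (f x - f y) ^ 2 * KK s x y) mu ∧
      ∫ y, (f x - f y) ^ 2 * KK s x y ∂mu = M x) ∧ Integrable M mu ∧
    ∫ x, M x ∂mu = 2 * lam s * ∑ p ∈ F, PP (2 * s) p.1 * c p ^ 2 := by
  choose M hM hMi hM0 using bilin hs
  refine ⟨fun x => ∑ p ∈ F, ∑ q ∈ F, c p * c q * M p q x, ?_, ?_, ?_⟩
  · intro x hx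
    have e : (fun y => (f x - f y) ^ 2 * KK s x y) = fun y => ∑ p ∈ F, ∑ q ∈ F, c p * c q *
      ((haar p.1 p.2 x - haar p.1 p.2 y) * (haar q.1 q.2 x - haar q.1 q.2 y) * KK s x y) := by
      ext y
      have : f x - f y = ∑ p ∈ F, c p * (haar p.1 p.2 x - haar p.1 p.2 y) := by
        rw [hf]; simp only [mul_sub, Finset.sum_sub_distrib]
      rw [this, sq, Finset.sum_mul_sum, Finset.sum_mul]
      refine Finset.sum_congr rfl fun p _ => ?_
      rw [Finset.sum_mul]
      refine Finset.sum_congr rfl fun q _ => ?_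
      ring
    have i1 : ∀ p ∈ F, ∀ q ∈ F, Integrable (fun y => c p * c q *
      ((haar p.1 p.2 x - haar p.1 p.2 y) * (haar q.1 q.2 x - haar q.1 q.2 y) * KK s x y)) mu :=
      fun p _ q _ => ((hM p q x hx).1).const_mul _
    rw [e]
    refine ⟨integrable_finsetSum _ fun p hp => integrable_finsetSum _ fun q hq => i1 p hp q hq, ?_⟩
    rw [integral_finsetSum _ fun p hp => integrable_finsetSum _ fun q hq => i1 p hp q hq]
    refine Finset.sum_congr rfl fun p hp => ?_
    rw [integral_finsetSum _ fun q hq => i1 p hp q hq]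
    refine Finset.sum_congr rfl fun q hq => ?_
    rw [integral_const_mul, (hM p q x hx).2]
  · exact integrable_finsetSum _ fun p hp => integrable_finsetSum _ fun q hq => (hMi p q).const_mul _
  · rw [integral_finsetSum _ fun p hp => integrable_finsetSum _ fun q hq => (hMi p q).const_mul _,
      Finset.mul_sum]
    refine Finset.sum_congr rfl fun p hp => ?_
    rw [integral_finsetSum _ fun q hq => (hMi p q).const_mul _]
    simp_rw [integral_const_mul, hM0]
    simp only [mul_ite, mul_zero, Finset.sum_ite_eq, hp, if_true]
    ring

lemma coef (F : Finset (ℤ × ℕ)) (c : ℤ × ℕ → ℝ) (f : ℝ → ℝ)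
    (hf : f = fun x => ∑ p ∈ F, c p * haar p.1 p.2 x) (q : ℤ × ℕ) :
    ∫ y, f y * haar q.1 q.2 y = if q ∈ F then c q else 0 := by
  have e : (fun y => f y * haar q.1 q.2 y) =
      fun y => ∑ p ∈ F, c p * (haar p.1 p.2 y * haar q.1 q.2 y) := by
    ext y; rw [hf, Finset.sum_mul]; refine Finset.sum_congr rfl fun p _ => ?_
    ring
  rw [e, integral_finsetSum _ fun p _ => (haar_orth p q).1.const_mul _]
  simp_rw [integral_const_mul, (haar_orth _ q).2]
  simp

lemma Dsi_eq (s : ℝ) (F : Finset (ℤ × ℕ)) (c : ℤ × ℕ → ℝ) (f : ℝ → ℝ)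
    (hf : f = fun x => ∑ p ∈ F, c p * haar p.1 p.2 x) (i : ℕ) (x : ℝ) :
    Dsi s i f x = ∑ p ∈ F with p.2 = i, PP s p.1 * c p * haar p.1 p.2 x := by
  have e : ∀ j : ℤ, (2 : ℝ) ^ (s * (j : ℝ)) * (∫ y, f y * haar j i y) * haar j i x =
      if (j, i) ∈ F then PP s j * c (j, i) * haar j i x else 0 := by
    intro j
    rw [coef F c f hf (j, i)]
    split_ifs <;> simp [PP]
  rw [Dsi]
  simp_rw [e]
  rw [tsum_eq_sum (s := (F.filter (fun p => p.2 = i)).image Prod.fst), Finset.sum_image]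
  · refine Finset.sum_congr rfl fun p hp => ?_
    obtain ⟨j, k⟩ := p
    obtain ⟨h1, rfl⟩ := Finset.mem_filter.1 hp
    simp only
    rw [if_pos h1]
  · intro p hp q hq h
    have h1 := (Finset.mem_filter.1 hp).2
    have h2 := (Finset.mem_filter.1 hq).2
    exact Prod.ext h (h1.trans h2.symm)
  · intro j hj
    rw [if_neg]
    intro h
    exact hj (Finset.mem_image.2 ⟨(j, i), Finset.mem_filter.2 ⟨h, rfl⟩, rfl⟩)

lemma Dsi_int (s : ℝ) (F : Finset (ℤ × ℕ)) (c : ℤ × ℕ → ℝ) (f : ℝ → ℝ)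
    (hf : f = fun x => ∑ p ∈ F, c p * haar p.1 p.2 x) (i : ℕ) :
    Integrable (fun x => Dsi s i f x ^ 2) ∧
    ∫ x, Dsi s i f x ^ 2 = ∑ p ∈ F with p.2 = i, PP (2 * s) p.1 * c p ^ 2 := by
  have e : (fun x => Dsi s i f x ^ 2) = fun x => ∑ p ∈ F with p.2 = i, ∑ q ∈ F with q.2 = i,
      (PP s p.1 * c p) * (PP s q.1 * c q) * (haar p.1 p.2 x * haar q.1 q.2 x) := by
    ext x
    rw [Dsi_eq s F c f hf, sq, Finset.sum_mul_sum]
    refine Finset.sum_congr rfl fun p _ => Finset.sum_congr rfl fun q _ => ?_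
    ring
  rw [e]
  have i1 := fun p q : ℤ × ℕ => (haar_orth p q).1.const_mul ((PP s p.1 * c p) * (PP s q.1 * c q))
  refine ⟨integrable_finsetSum _ fun p hp => integrable_finsetSum _ fun q hq => i1 p q, ?_⟩
  rw [integral_finsetSum _ fun p hp => integrable_finsetSum _ fun q hq => i1 p q]
  refine Finset.sum_congr rfl fun p hp => ?_
  rw [integral_finsetSum _ fun q hq => i1 p q]
  simp_rw [integral_const_mul, (haar_orth _ _).2]
  simp only [mul_ite, mul_zero, Finset.sum_ite_eq, hp, if_true]
  rw [two_mul, ← PP_mul]; ring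

lemma Dsi_zero (s : ℝ) (F : Finset (ℤ × ℕ)) (c : ℤ × ℕ → ℝ) (f : ℝ → ℝ)
    (hf : f = fun x => ∑ p ∈ F, c p * haar p.1 p.2 x) (i : ℕ) (hi : i ∉ F.image Prod.snd) (x : ℝ) :
    Dsi s i f x = 0 := by
  rw [Dsi_eq s F c f hf, Finset.sum_eq_zero]
  intro p hp
  obtain ⟨h1, rfl⟩ := Finset.mem_filter.1 hp
  exact absurd (Finset.mem_image_of_mem _ h1) hi

lemma sum_Dsi (s : ℝ) (F : Finset (ℤ × ℕ)) (c : ℤ × ℕ → ℝ) (f : ℝ → ℝ)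
    (hf : f = fun x => ∑ p ∈ F, c p * haar p.1 p.2 x) :
    ∑' i : ℕ, ∫ x, (Dsi s i f x) ^ 2 = ∑ p ∈ F, PP (2 * s) p.1 * c p ^ 2 := by
  rw [tsum_eq_sum (s := F.image Prod.snd)]
  · simp_rw [(Dsi_int s F c f hf _).2]
    exact Finset.sum_fiberwise_of_maps_to (fun p hp => Finset.mem_image_of_mem _ hp) _
  · intro i hi
    simp [Dsi_zero s F c f hf i hi]

/-- for `f` in the finite linear span of the Haar system,
`Σ_i ‖D^s_{(i)} f‖₂² = Σ_{h ∈ H} |I(h)|^{-2s} |⟨f,h⟩|²`, the dyadic energy equals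
`c Σ_i ‖D^s_{(i)} f‖₂²` for a constant `c > 0` independent of `f`, and in
particular the energy is finite iff the gradient `(D^s_{(i)} f)_i ∈ L²(ℝ⁺, ℓ²)`. -/
theorem energy_eq_const_mul_sum_partials (s : ℝ) (hs0 : 0 < s) (hs1 : s < 1) :
    (∀ f : ℝ → ℝ, HaarSpan f →
      ∑' i : ℕ, ∫ x, (Dsi s i f x) ^ 2 =
        ∑' p : ℤ × ℕ,
          (volume (dyI p.1 p.2)).toReal ^ (-(2 * s)) * (∫ y, f y * haar p.1 p.2 y) ^ 2) ∧
    (∃ c : ℝ, 0 < c ∧ ∀ f : ℝ → ℝ, HaarSpan f →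
      dyEnergy s f = c * ∑' i : ℕ, ∫ x, (Dsi s i f x) ^ 2) ∧
    (∀ f : ℝ → ℝ, HaarSpan f →
      ((∫⁻ x in Set.Ici (0 : ℝ), ∫⁻ y in Set.Ici (0 : ℝ),
          ENNReal.ofReal ((f x - f y) ^ 2 * dyDist x y ^ (-(1 + 2 * s)))) < ⊤ ↔
        (∑' i : ℕ, ∫⁻ x, ENNReal.ofReal ((Dsi s i f x) ^ 2)) < ⊤)) := by

  refine ⟨?_, ⟨2 * lam s, by have := lam_pos s; positivity, ?_⟩, ?_⟩
  · rintro f ⟨F, c, hf⟩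
    rw [sum_Dsi s F c f hf, tsum_eq_sum (s := F)]
    · refine Finset.sum_congr rfl fun p hp => ?_
      rw [coef F c f hf p, if_pos hp, vol_dyI', zpow_rpow]
    · intro p hp
      rw [coef F c f hf p, if_neg hp]; simp
  · rintro f ⟨F, c, hf⟩
    obtain ⟨M, h1, h2, h3⟩ := energy hs0 F c f hf
    rw [sum_Dsi s F c f hf, ← h3, dyEnergy]
    exact setIntegral_congr_fun measurableSet_Ici fun x hx => (h1 x hx).2
  · rintro f ⟨F, c, hf⟩
    obtain ⟨M, h1, h2, h3⟩ := energy hs0 F c f hf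
    have hnn : ∀ x y, 0 ≤ (f x - f y) ^ 2 * KK s x y := by
      intro x y
      refine mul_nonneg (sq_nonneg _) (Real.rpow_nonneg ?_ _)
      unfold dyDist
      split_ifs
      · exact le_rfl
      · exact ENNReal.toReal_nonneg
    constructor
    · intro _
      rw [tsum_eq_sum (s := F.image Prod.snd)]
      · rw [ENNReal.sum_lt_top]
        intro i _
        rw [← ofReal_integral_eq_lintegral_ofReal (Dsi_int s F c f hf i).1
          (Filter.Eventually.of_forall fun x => sq_nonneg _)]
        exact ENNReal.ofReal_lt_top
      · intro i hi
        simp [Dsi_zero s F c f hf i hi]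
    · intro _
      have e : ∫⁻ x in Set.Ici (0 : ℝ), ∫⁻ y in Set.Ici (0 : ℝ),
          ENNReal.ofReal ((f x - f y) ^ 2 * dyDist x y ^ (-(1 + 2 * s))) =
          ∫⁻ x in Set.Ici (0 : ℝ), ENNReal.ofReal (M x) := by
        refine setLIntegral_congr_fun measurableSet_Ici fun x hx => ?_
        rw [← (h1 x hx).2, ofReal_integral_eq_lintegral_ofReal (h1 x hx).1
          (Filter.Eventually.of_forall fun y => hnn x y)]
        rfl
      rw [e, ← ofReal_integral_eq_lintegral_ofReal h2]
      · exact ENNReal.ofReal_lt_top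
      · filter_upwards [ae_restrict_mem measurableSet_Ici] with x hx
        rw [← (h1 x hx).2]
        exact integral_nonneg fun y => hnn x y
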